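/- arXiv:0903.4428 — 8 statements merged into one kernel-verified Lean document; each statement's English description precedes it below -/
import Mathlib

section
/- Let a_i, b_i, c_i ∈ ℂ∖{0} and d_i ∈ ℂ (i = 1,2,3). The linear cube system is compatible (consistent on the cube) if and only if the coefficients satisfy conditions (abc) and conditions (hom). -/
/-!
Number the lattice directions (tilde, hat, bar) cyclically by `Fin 3`. The three values at the
vertex diagonally opposite to `u` are affine in the initial data, and all coefficients of the
difference of two consecutive ones are linear combinations of the defects in conditions (abc) and
(hom); in particular so is the coefficient of `u`. Hence (abc) and (hom) suffice. Conversely, the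
defects themselves occur as coefficients, so they are recovered by evaluating at the origin and at
the unit vectors.
-/

/-- The coefficients of a linear cube system. The equation with index `i` lives on the two faces
spanned by the directions `i` and `i + 1`; the paper's indices `1, 2, 3` and shifts tilde, hat, bar
are both `0, 1, 2` here. -/
structure LinearCube (R : Type*) where
  a : Fin 3 → R
  b : Fin 3 → R
  c : Fin 3 → R
  d : Fin 3 → R

namespace LinearCube

section Ring

variable {R : Type*} [Ring R] (Q : LinearCube R)

/-- The value at the vertex of `u` shifted in the directions `i` and `i + 1`, where `x j` is the
value at the vertex of `u` shifted in direction `j`. -/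
def faceVertex (u : R) (x : Fin 3 → R) (i : Fin 3) : R :=
  Q.d i - Q.a i * u - Q.b i * x i - Q.c i * x (i + 1)

/-- The value at the vertex of the cube opposite to `u`, computed from the equation `i` on the face
shifted in the remaining direction `i + 2`. -/
def oppositeVertex (u : R) (x : Fin 3 → R) (i : Fin 3) : R :=
  Q.d i - Q.a i * x (i + 2) - Q.b i * Q.faceVertex u x (i + 2) - Q.c i * Q.faceVertex u x (i + 1)

/-- Consistency on the cube: the three ways to compute the value opposite to `u` agree. -/
def IsCompatible : Prop :=
  ∀ u x, Q.oppositeVertex u x 0 = Q.oppositeVertex u x 1 ∧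
    Q.oppositeVertex u x 1 = Q.oppositeVertex u x 2

/-- The amount by which the `i`-th of the conditions (abc) fails. -/
def abcDefect (i : Fin 3) : R :=
  Q.b i * Q.b (i + 2) - Q.b (i + 2) * Q.c (i + 1) + Q.c (i + 1) * Q.c i - Q.a i

/-- The amount by which the `i`-th of the conditions (hom) fails. -/
def homDefect (i : Fin 3) : R :=
  (Q.b (i + 1) - Q.c (i + 2)) * Q.d i - (1 + Q.b (i + 2)) * Q.d (i + 1) +
    (1 + Q.c (i + 1)) * Q.d (i + 2)

theorem isCompatible_iff_forall_oppositeVertex_eq_add_one :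
    Q.IsCompatible ↔ ∀ u x i, Q.oppositeVertex u x i = Q.oppositeVertex u x (i + 1) := by
  refine forall₂_congr fun u x ↦ ⟨fun ⟨h₀₁, h₁₂⟩ i ↦ ?_, fun h ↦ ⟨h 0, h 1⟩⟩
  fin_cases i
  exacts [h₀₁, h₁₂, (h₀₁.trans h₁₂).symm]

theorem isCompatible_iff_forall_vecCons :
    Q.IsCompatible ↔ ∀ u ut uh ub : R,
      Q.oppositeVertex u ![ut, uh, ub] 0 = Q.oppositeVertex u ![ut, uh, ub] 1 ∧
        Q.oppositeVertex u ![ut, uh, ub] 1 = Q.oppositeVertex u ![ut, uh, ub] 2 := by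
  simp only [IsCompatible, Fin.forall_fin_succ_pi, Fin.forall_fin_zero_pi]
  rfl

theorem forall_abcDefect_eq_zero_iff :
    (∀ i, Q.abcDefect i = 0) ↔
      Q.b 0 * Q.b 2 - Q.b 2 * Q.c 1 + Q.c 1 * Q.c 0 = Q.a 0 ∧
        Q.b 1 * Q.b 0 - Q.b 0 * Q.c 2 + Q.c 2 * Q.c 1 = Q.a 1 ∧
          Q.b 2 * Q.b 1 - Q.b 1 * Q.c 0 + Q.c 0 * Q.c 2 = Q.a 2 := by
  simp [abcDefect, Fin.forall_fin_succ, sub_eq_zero]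

theorem forall_homDefect_eq_zero_iff :
    (∀ i, Q.homDefect i = 0) ↔
      (Q.b 1 - Q.c 2) * Q.d 0 - (1 + Q.b 2) * Q.d 1 + (1 + Q.c 1) * Q.d 2 = 0 ∧
        (1 + Q.c 2) * Q.d 0 + (Q.b 2 - Q.c 0) * Q.d 1 - (1 + Q.b 0) * Q.d 2 = 0 ∧
          -(1 + Q.b 1) * Q.d 0 + (1 + Q.c 0) * Q.d 1 + (Q.b 0 - Q.c 1) * Q.d 2 = 0 := by
  have h₁ : Q.homDefect 1 =
      (1 + Q.c 2) * Q.d 0 + (Q.b 2 - Q.c 0) * Q.d 1 - (1 + Q.b 0) * Q.d 2 := by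
    change (Q.b 2 - Q.c 0) * Q.d 1 - (1 + Q.b 0) * Q.d 2 + (1 + Q.c 2) * Q.d 0 = _
    abel
  have h₂ : Q.homDefect 2 =
      -(1 + Q.b 1) * Q.d 0 + (1 + Q.c 0) * Q.d 1 + (Q.b 0 - Q.c 1) * Q.d 2 := by
    change (Q.b 0 - Q.c 1) * Q.d 2 - (1 + Q.b 1) * Q.d 0 + (1 + Q.c 0) * Q.d 1 = _
    rw [neg_mul]
    abel
  rw [← h₁, ← h₂]
  exact Fin.forall_fin_succ.trans (and_congr_right' Fin.forall_fin_two)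

end Ring

variable {R : Type*} [CommRing R] (Q : LinearCube R)

theorem oppositeVertex_sub_oppositeVertex_add_one (u : R) (x : Fin 3 → R) (i : Fin 3) :
    Q.oppositeVertex u x i - Q.oppositeVertex u x (i + 1) =
      (Q.b (i + 1) * Q.abcDefect i - Q.c i * Q.abcDefect (i + 1) -
          (Q.b i - Q.c (i + 1)) * Q.abcDefect (i + 2)) * u +
        Q.abcDefect i * x (i + 2) - Q.abcDefect (i + 1) * x i - Q.homDefect (i + 2) := by
  have h₁₁ : i + 1 + 1 = i + 2 := by decide +revert
  have h₁₂ : i + 1 + 2 = i := by decide +revert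
  have h₂₁ : i + 2 + 1 = i := by decide +revert
  have h₂₂ : i + 2 + 2 = i + 1 := by decide +revert
  simp only [oppositeVertex, faceVertex, abcDefect, homDefect, h₁₁, h₁₂, h₂₁, h₂₂]
  ring

variable {Q}

theorem IsCompatible.homDefect_eq_zero (h : Q.IsCompatible) (i : Fin 3) : Q.homDefect i = 0 := by
  have h_index : ∀ j : Fin 3, j + 1 + 2 = j := by decide
  have h_eq := Q.isCompatible_iff_forall_oppositeVertex_eq_add_one.mp h 0 0 (i + 1)
  have h_sub := Q.oppositeVertex_sub_oppositeVertex_add_one 0 0 (i + 1)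
  simpa [h_eq, h_index] using h_sub

theorem IsCompatible.abcDefect_eq_zero (h : Q.IsCompatible) (i : Fin 3) : Q.abcDefect i = 0 := by
  have h_eq := Q.isCompatible_iff_forall_oppositeVertex_eq_add_one.mp h 0 (Pi.single (i + 2) 1) i
  have h_sub := Q.oppositeVertex_sub_oppositeVertex_add_one 0 (Pi.single (i + 2) 1) i
  simpa [h_eq, h.homDefect_eq_zero] using h_sub.symm

theorem isCompatible_of_defects_eq_zero (h_abc : ∀ i, Q.abcDefect i = 0)
    (h_hom : ∀ i, Q.homDefect i = 0) : Q.IsCompatible := by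
  refine Q.isCompatible_iff_forall_oppositeVertex_eq_add_one.mpr fun u x i ↦ sub_eq_zero.mp ?_
  simp [oppositeVertex_sub_oppositeVertex_add_one, h_abc, h_hom]

end LinearCube

theorem linear_cube_compatible_iff_general {R : Type*} [CommRing R] (Q : LinearCube R) :
    Q.IsCompatible ↔ (∀ i, Q.abcDefect i = 0) ∧ ∀ i, Q.homDefect i = 0 :=
  ⟨fun h ↦ ⟨h.abcDefect_eq_zero, h.homDefect_eq_zero⟩,
    fun ⟨h_abc, h_hom⟩ ↦ LinearCube.isCompatible_of_defects_eq_zero h_abc h_hom⟩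

/-- Compatibility of the linear cube system is equivalent to conditions (abc) and (hom). -/
theorem linear_cube_compatible_iff
    (a₁ a₂ a₃ b₁ b₂ b₃ c₁ c₂ c₃ d₁ d₂ d₃ : ℂ)
    (ha₁ : a₁ ≠ 0) (ha₂ : a₂ ≠ 0) (ha₃ : a₃ ≠ 0)
    (hb₁ : b₁ ≠ 0) (hb₂ : b₂ ≠ 0) (hb₃ : b₃ ≠ 0)
    (hc₁ : c₁ ≠ 0) (hc₂ : c₂ ≠ 0) (hc₃ : c₃ ≠ 0) :
    (∀ u ut uh ub : ℂ,
      (d₁ - a₁*ub - b₁*(d₃ - a₃*u - b₃*ub - c₃*ut) - c₁*(d₂ - a₂*u - b₂*uh - c₂*ub)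
        = d₂ - a₂*ut - b₂*(d₁ - a₁*u - b₁*ut - c₁*uh) - c₂*(d₃ - a₃*u - b₃*ub - c₃*ut)) ∧
      (d₂ - a₂*ut - b₂*(d₁ - a₁*u - b₁*ut - c₁*uh) - c₂*(d₃ - a₃*u - b₃*ub - c₃*ut)
        = d₃ - a₃*uh - b₃*(d₂ - a₂*u - b₂*uh - c₂*ub) - c₃*(d₁ - a₁*u - b₁*ut - c₁*uh)))
    ↔ ((b₁*b₃ - b₃*c₂ + c₂*c₁ = a₁ ∧
        b₂*b₁ - b₁*c₃ + c₃*c₂ = a₂ ∧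
        b₃*b₂ - b₂*c₁ + c₁*c₃ = a₃) ∧
       ((b₂ - c₃)*d₁ - (1 + b₃)*d₂ + (1 + c₂)*d₃ = 0 ∧
        (1 + c₃)*d₁ + (b₃ - c₁)*d₂ - (1 + b₁)*d₃ = 0 ∧
        -(1 + b₂)*d₁ + (1 + c₁)*d₂ + (b₁ - c₂)*d₃ = 0)) := by
  let Q : LinearCube ℂ := ⟨![a₁, a₂, a₃], ![b₁, b₂, b₃], ![c₁, c₂, c₃], ![d₁, d₂, d₃]⟩
  exact Q.isCompatible_iff_forall_vecCons.symm.trans <|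
    (linear_cube_compatible_iff_general Q).trans <|
      and_congr Q.forall_abcDefect_eq_zero_iff Q.forall_homDefect_eq_zero_iff
end

section
/- Let b_i, c_i ∈ ℂ (i = 1,2,3) and define a_1 := b1·b3 − b3·c2 + c2·c1, a_2 := b2·b1 − b1·c3 + c3·c2, a_3 := b3·b2 − b2·c1 + c1·c3. Then rank(M) ≤ 1 if and only if a_i + b_i + c_i + 1 = 0 for all i ∈ {1,2,3}. (Equivalently: all nine 2×2 cofactors of M vanish if and only if a_i + b_i + c_i + 1 = 0 for i = 1,2,3.) -/
/-!
The nine cofactors of a `3 × 3` matrix are the entries of the cross products of its rows, and they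
all vanish exactly when the rank is at most one. The rows of `M` sum to zero, so the cross product
of any two of them is zero or, up to sign, that of the first two, whose entries are the three
expressions `aᵢ + bᵢ + cᵢ + 1`.
-/

section RankOne

variable {m n R : Type*} [Fintype n] [CommRing R] [IsDomain R]

theorem det_submatrix_eq_zero_of_rank_lt {p : Type*} [Fintype p] [DecidableEq p]
    {M : Matrix m n R} (hM : M.rank < Fintype.card p) (r : p → m) (c : p → n) :
    (M.submatrix r c).det = 0 := by
  contrapose! hM
  calc Fintype.card p = (M.submatrix r c).rank := (Matrix.rank_of_det_ne_zero hM).symm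
    _ ≤ M.rank := M.rank_submatrix_le r c

theorem matrix_rank_le_one_of_forall_mul_eq_mul {M : Matrix m n R}
    (hM : ∀ i k j l, M i j * M k l = M i l * M k j) : M.rank ≤ 1 := by
  obtain rfl | hM₀ := eq_or_ne M 0
  · simp
  obtain ⟨i, j, hij⟩ : ∃ i j, M i j ≠ 0 := by
    contrapose! hM₀
    exact Matrix.ext hM₀
  have hsmul : M i j • M = Matrix.vecMulVec (M · j) (M i) := by
    ext k l
    rw [Matrix.smul_apply, smul_eq_mul, Matrix.vecMulVec_apply, hM i k j l, mul_comm]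
  calc M.rank = (M i j • M).rank :=
        (Matrix.rank_smul_of_mem_nonZeroDivisors M (mem_nonZeroDivisors_of_ne_zero hij)).symm
    _ ≤ 1 := hsmul ▸ Matrix.rank_vecMulVec_le _ _

theorem matrix_rank_le_one_iff_forall_mul_eq_mul {M : Matrix m n R} :
    M.rank ≤ 1 ↔ ∀ i k j l, M i j * M k l = M i l * M k j := by
  refine ⟨fun hM i k j l => ?_, matrix_rank_le_one_of_forall_mul_eq_mul⟩
  have hdet : (M.submatrix ![i, k] ![j, l]).det = 0 :=
    det_submatrix_eq_zero_of_rank_lt (by simpa [Nat.lt_succ_iff] using hM) _ _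
  rw [Matrix.det_fin_two] at hdet
  simpa [sub_eq_zero] using hdet

end RankOne

section CrossProduct

open scoped Matrix

variable {R : Type*} [CommRing R]

theorem cross_eq_zero_iff_forall_mul_eq_mul {v w : Fin 3 → R} :
    v ⨯₃ w = 0 ↔ ∀ j l, v j * w l = v l * w j := by
  constructor
  · intro h j l
    obtain ⟨h₁₂, h₂₀, h₀₁⟩ :
        v 1 * w 2 = v 2 * w 1 ∧ v 2 * w 0 = v 0 * w 2 ∧ v 0 * w 1 = v 1 * w 0 := by
      simpa [cross_apply, sub_eq_zero] using h
    fin_cases j <;> fin_cases l <;> simp [h₁₂, h₂₀, h₀₁]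
  · intro h
    simp [cross_apply, h 1 2, h 2 0, h 0 1]

theorem matrix_rank_le_one_iff_forall_cross_eq_zero [IsDomain R] {m : Type*}
    {M : Matrix m (Fin 3) R} : M.rank ≤ 1 ↔ ∀ i k, M.row i ⨯₃ M.row k = 0 := by
  simp only [matrix_rank_le_one_iff_forall_mul_eq_mul, cross_eq_zero_iff_forall_mul_eq_mul,
    Matrix.row_apply]

theorem forall_cross_eq_zero_iff_of_sum_eq_zero {v : Fin 3 → Fin 3 → R} (hv : ∑ i, v i = 0) :
    (∀ i k, v i ⨯₃ v k = 0) ↔ v 0 ⨯₃ v 1 = 0 := by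
  refine ⟨fun h => h 0 1, fun h₀₁ => ?_⟩
  have hv₂ : v 2 = -(v 0 + v 1) := by
    rw [Fin.sum_univ_three] at hv
    exact eq_neg_of_add_eq_zero_right hv
  have h₁₀ : v 1 ⨯₃ v 0 = 0 := by rw [← cross_anticomm, h₀₁, neg_zero]
  simp [Fin.forall_fin_succ, hv₂, h₀₁, h₁₀]

end CrossProduct

open scoped Matrix in
theorem M_rank_le_one_iff_general {R : Type*} [CommRing R] [IsDomain R]
    (a₁ a₂ a₃ b₁ b₂ b₃ c₁ c₂ c₃ : R)
    (ha₁ : a₁ = b₁ * b₃ - b₃ * c₂ + c₂ * c₁)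
    (ha₂ : a₂ = b₂ * b₁ - b₁ * c₃ + c₃ * c₂)
    (ha₃ : a₃ = b₃ * b₂ - b₂ * c₁ + c₁ * c₃)
    (M : Matrix (Fin 3) (Fin 3) R)
    (hM : M = !![b₂ - c₃, -1 - b₃, 1 + c₂;
                 1 + c₃, b₃ - c₁, -1 - b₁;
                 -1 - b₂, 1 + c₁, b₁ - c₂]) :
    M.rank ≤ 1 ↔
      (a₁ + b₁ + c₁ + 1 = 0 ∧ a₂ + b₂ + c₂ + 1 = 0 ∧ a₃ + b₃ + c₃ + 1 = 0) := by
  have hsum : ∑ i, M.row i = 0 := by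
    rw [Fin.sum_univ_three, hM]
    ext j
    fin_cases j <;> simp <;> ring
  have hcross : M.row 0 ⨯₃ M.row 1 =
      ![a₁ + b₁ + c₁ + 1, a₂ + b₂ + c₂ + 1, a₃ + b₃ + c₃ + 1] := by
    subst hM ha₁ ha₂ ha₃
    ext j
    fin_cases j <;> simp [cross_apply] <;> ring
  rw [matrix_rank_le_one_iff_forall_cross_eq_zero, forall_cross_eq_zero_iff_of_sum_eq_zero hsum,
    hcross]
  simp

/-- With a₁, a₂, a₃ defined by conditions (abc), rank M ≤ 1 iff aᵢ + bᵢ + cᵢ + 1 = 0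
for i = 1,2,3. -/
theorem M_rank_le_one_iff
    (a₁ a₂ a₃ b₁ b₂ b₃ c₁ c₂ c₃ : ℂ)
    (ha₁ : a₁ = b₁*b₃ - b₃*c₂ + c₂*c₁)
    (ha₂ : a₂ = b₂*b₁ - b₁*c₃ + c₃*c₂)
    (ha₃ : a₃ = b₃*b₂ - b₂*c₁ + c₁*c₃)
    (M : Matrix (Fin 3) (Fin 3) ℂ)
    (hM : M = !![b₂ - c₃, -1 - b₃, 1 + c₂;
                 1 + c₃, b₃ - c₁, -1 - b₁;
                 -1 - b₂, 1 + c₁, b₁ - c₂]) :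
    M.rank ≤ 1 ↔
      (a₁ + b₁ + c₁ + 1 = 0 ∧ a₂ + b₂ + c₂ + 1 = 0 ∧ a₃ + b₃ + c₃ + 1 = 0) :=
  M_rank_le_one_iff_general a₁ a₂ a₃ b₁ b₂ b₃ c₁ c₂ c₃ ha₁ ha₂ ha₃ M hM
end

section
/- Let b_i, c_i ∈ ℂ (i = 1,2,3) satisfy a_i + b_i + c_i + 1 = 0 for i = 1,2,3, where a_1 := b1·b3 − b3·c2 + c2·c1, a_2 := b2·b1 − b1·c3 + c3·c2, a_3 := b3·b2 − b2·c1 + c1·c3. Then the vectors v1 = (1+b1, 0, 1+c3), v2 = (1+c1, 1+b2, 0) and v3 = (0, 1+c2, 1+b3) in ℂ³ all lie in the kernel of M, i.e. M·v1 = M·v2 = M·v3 = 0. -/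
/-!
The construction is equivariant under the cyclic shift of the indices `1, 2, 3`, so it suffices to
compute one product: with `rᵢ = aᵢ + bᵢ + cᵢ + 1` and indices modulo `3`,
`M vᵢ = rᵢ₊₁ (eᵢ - eᵢ₋₁)`, as a polynomial identity.
-/

section CyclicShift

open Matrix

variable {R : Type*} [CommRing R] (b c : Fin 3 → R)

/-- The matrix `M` attached to `b` and `c`, with the indices `1, 2, 3` written as `0, 1, 2`. -/
def cyclicMatrix : Matrix (Fin 3) (Fin 3) R :=
  !![b 1 - c 2, -1 - b 2, 1 + c 1;
     1 + c 2, b 2 - c 0, -1 - b 0;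
     -1 - b 1, 1 + c 0, b 0 - c 1]

/-- The three vectors `v₁, v₂, v₃` attached to `b` and `c`, listed as rows. -/
def kernelVector : Fin 3 → Fin 3 → R :=
  ![![1 + b 0, 0, 1 + c 2],
    ![1 + c 0, 1 + b 1, 0],
    ![0, 1 + c 1, 1 + b 2]]

/-- The expression `aᵢ + bᵢ + cᵢ + 1` with `aᵢ` written out in terms of `b` and `c`; the indices
are read modulo `3`. Its vanishing is the relation imposed on `b` and `c`. -/
def cyclicDefect (i : Fin 3) : R :=
  b i * b (i - 1) - b (i - 1) * c (i + 1) + c (i + 1) * c i + b i + c i + 1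

theorem cyclicMatrix_submatrix_addLeft (i : Fin 3) :
    (cyclicMatrix b c).submatrix (Equiv.addLeft i) (Equiv.addLeft i) =
      cyclicMatrix (b ∘ Equiv.addLeft i) (c ∘ Equiv.addLeft i) := by
  ext j k
  fin_cases i <;> fin_cases j <;> fin_cases k <;> rfl

theorem kernelVector_comp_addLeft (i : Fin 3) :
    kernelVector b c i ∘ Equiv.addLeft i =
      kernelVector (b ∘ Equiv.addLeft i) (c ∘ Equiv.addLeft i) 0 := by
  ext j
  fin_cases i <;> fin_cases j <;> rfl

theorem cyclicDefect_comp_addLeft (i j : Fin 3) :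
    cyclicDefect (b ∘ Equiv.addLeft i) (c ∘ Equiv.addLeft i) j = cyclicDefect b c (i + j) := by
  simp [cyclicDefect, add_assoc, add_sub_assoc]

theorem cyclicMatrix_mulVec_kernelVector_zero :
    cyclicMatrix b c *ᵥ kernelVector b c 0 = cyclicDefect b c 1 • ![1, 0, -1] := by
  have hdefect : cyclicDefect b c 1 = b 1 * b 0 - b 0 * c 2 + c 2 * c 1 + b 1 + c 1 + 1 := rfl
  have hprod (j : Fin 3) : (cyclicMatrix b c *ᵥ kernelVector b c 0) j =
      cyclicMatrix b c j 0 * (1 + b 0) + cyclicMatrix b c j 2 * (1 + c 2) := by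
    simp [mulVec, dotProduct, Fin.sum_univ_three, kernelVector]
  ext j
  rw [hprod, hdefect]
  fin_cases j
  · change (b 1 - c 2) * (1 + b 0) + (1 + c 1) * (1 + c 2) = _ * 1
    ring
  · change (1 + c 2) * (1 + b 0) + (-1 - b 0) * (1 + c 2) = _ * 0
    ring
  · change (-1 - b 1) * (1 + b 0) + (b 0 - c 1) * (1 + c 2) = _ * -1
    ring

theorem cyclicMatrix_mulVec_kernelVector_comp_addLeft (i : Fin 3) :
    (cyclicMatrix b c *ᵥ kernelVector b c i) ∘ Equiv.addLeft i =
      cyclicDefect b c (i + 1) • ![1, 0, -1] := by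
  rw [← cyclicDefect_comp_addLeft, ← cyclicMatrix_mulVec_kernelVector_zero,
    ← cyclicMatrix_submatrix_addLeft, ← kernelVector_comp_addLeft, submatrix_mulVec_equiv,
    Function.comp_assoc, Equiv.self_comp_symm, Function.comp_id]

theorem v_in_kernel_M_general (h : ∀ i, cyclicDefect b c i = 0) (i : Fin 3) :
    cyclicMatrix b c *ᵥ kernelVector b c i = 0 := by
  refine (Equiv.addLeft i).surjective.injective_comp_right ?_
  simp only [cyclicMatrix_mulVec_kernelVector_comp_addLeft, h, zero_smul, Pi.zero_comp]

end CyclicShift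

/-- Under aᵢ + bᵢ + cᵢ + 1 = 0 (with aᵢ given by (abc)), the vectors v₁, v₂, v₃ lie in
the kernel of M. -/
theorem v_in_kernel_M
    (a₁ a₂ a₃ b₁ b₂ b₃ c₁ c₂ c₃ : ℂ)
    (ha₁ : a₁ = b₁*b₃ - b₃*c₂ + c₂*c₁)
    (ha₂ : a₂ = b₂*b₁ - b₁*c₃ + c₃*c₂)
    (ha₃ : a₃ = b₃*b₂ - b₂*c₁ + c₁*c₃)
    (h₁ : a₁ + b₁ + c₁ + 1 = 0)
    (h₂ : a₂ + b₂ + c₂ + 1 = 0)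
    (h₃ : a₃ + b₃ + c₃ + 1 = 0)
    (M : Matrix (Fin 3) (Fin 3) ℂ)
    (hM : M = !![b₂ - c₃, -1 - b₃, 1 + c₂;
                 1 + c₃, b₃ - c₁, -1 - b₁;
                 -1 - b₂, 1 + c₁, b₁ - c₂]) :
    M.mulVec ![1 + b₁, 0, 1 + c₃] = 0 ∧
    M.mulVec ![1 + c₁, 1 + b₂, 0] = 0 ∧
    M.mulVec ![0, 1 + c₂, 1 + b₃] = 0 := by
  subst ha₁ ha₂ ha₃ hM
  have hker := v_in_kernel_M_general ![b₁, b₂, b₃] ![c₁, c₂, c₃]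
    (Fin.forall_fin_succ.2 ⟨h₁, Fin.forall_fin_two.2 ⟨h₂, h₃⟩⟩)
  exact ⟨hker 0, hker 1, hker 2⟩
end

section
/- Let b_i, c_i ∈ ℂ (i = 1,2,3) and define a_1 := b1·b3 − b3·c2 + c2·c1, a_2 := b2·b1 − b1·c3 + c3·c2, a_3 := b3·b2 − b2·c1 + c1·c3. Then the vector w = (a1+b1+c1+1, a2+b2+c2+1, a3+b3+c3+1) ∈ ℂ³ lies in the kernel of M, i.e. M·w = 0. -/
/-!
The columns of `M` sum to zero, so `det M = 0` and `M * adjugate M = 0`. Expanding the cofactors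
along the first row shows that the first column of `adjugate M` is exactly `w`.
-/

section Adjugate

open Matrix

variable {n R : Type*} [Fintype n] [DecidableEq n] [CommRing R]

theorem det_eq_zero_of_sum_col_eq_zero [Nonempty n] {A : Matrix n n R}
    (hA : ∀ j, ∑ i, A i j = 0) : A.det = 0 := by
  inhabit n
  have transpose_mulVec_one : Aᵀ *ᵥ 1 = 0 := by
    ext j
    simpa [mulVec, dotProduct] using hA j
  rw [← det_transpose]
  exact det_eq_zero_of_mulVec_eq_zero_of_mem_nonZeroDivisors transpose_mulVec_one
    (i := default) (one_mem _)

theorem mulVec_adjugate_col (A : Matrix n n R) (j : n) :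
    A *ᵥ A.adjugate.col j = A.det • Pi.single j 1 := by
  rw [← mulVec_single_one, ← cramer_eq_adjugate_mulVec, mulVec_cramer]

theorem mulVec_adjugate_col_eq_zero_of_sum_col_eq_zero {A : Matrix n n R}
    (hA : ∀ j, ∑ i, A i j = 0) (j : n) : A *ᵥ A.adjugate.col j = 0 := by
  have : Nonempty n := ⟨j⟩
  rw [mulVec_adjugate_col, det_eq_zero_of_sum_col_eq_zero hA, zero_smul]

end Adjugate

theorem w_in_kernel_M_general {R : Type*} [CommRing R]
    (a₁ a₂ a₃ b₁ b₂ b₃ c₁ c₂ c₃ : R)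
    (ha₁ : a₁ = b₁ * b₃ - b₃ * c₂ + c₂ * c₁)
    (ha₂ : a₂ = b₂ * b₁ - b₁ * c₃ + c₃ * c₂)
    (ha₃ : a₃ = b₃ * b₂ - b₂ * c₁ + c₁ * c₃)
    (M : Matrix (Fin 3) (Fin 3) R)
    (hM : M = !![b₂ - c₃, -1 - b₃, 1 + c₂;
                 1 + c₃, b₃ - c₁, -1 - b₁;
                 -1 - b₂, 1 + c₁, b₁ - c₂]) :
    M.mulVec ![a₁ + b₁ + c₁ + 1, a₂ + b₂ + c₂ + 1, a₃ + b₃ + c₃ + 1] = 0 := by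
  have sum_col_eq_zero : ∀ j, ∑ i, M i j = 0 := by
    intro j
    fin_cases j <;> simp [hM, Fin.sum_univ_three] <;> ring
  have adjugate_col_zero :
      M.adjugate.col 0 = ![a₁ + b₁ + c₁ + 1, a₂ + b₂ + c₂ + 1, a₃ + b₃ + c₃ + 1] := by
    rw [hM, Matrix.adjugate_fin_three_of, ha₁, ha₂, ha₃]
    ext i
    fin_cases i <;> simp <;> ring
  rw [← adjugate_col_zero]
  exact mulVec_adjugate_col_eq_zero_of_sum_col_eq_zero sum_col_eq_zero 0

/-- The vector w = (aᵢ + bᵢ + cᵢ + 1)ᵢ lies in the kernel of M. -/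
theorem w_in_kernel_M
    (a₁ a₂ a₃ b₁ b₂ b₃ c₁ c₂ c₃ : ℂ)
    (ha₁ : a₁ = b₁*b₃ - b₃*c₂ + c₂*c₁)
    (ha₂ : a₂ = b₂*b₁ - b₁*c₃ + c₃*c₂)
    (ha₃ : a₃ = b₃*b₂ - b₂*c₁ + c₁*c₃)
    (M : Matrix (Fin 3) (Fin 3) ℂ)
    (hM : M = !![b₂ - c₃, -1 - b₃, 1 + c₂;
                 1 + c₃, b₃ - c₁, -1 - b₁;
                 -1 - b₂, 1 + c₁, b₁ - c₂]) :
    M.mulVec ![a₁ + b₁ + c₁ + 1, a₂ + b₂ + c₂ + 1, a₃ + b₃ + c₃ + 1] = 0 :=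
  w_in_kernel_M_general a₁ a₂ a₃ b₁ b₂ b₃ c₁ c₂ c₃ ha₁ ha₂ ha₃ M hM
end

section
/- Let b_i, c_i ∈ ℂ (i = 1,2,3) and define a_1 := b1·b3 − b3·c2 + c2·c1, a_2 := b2·b1 − b1·c3 + c3·c2, a_3 := b3·b2 − b2·c1 + c1·c3. If rank(M) = 2, then the vector w = (a1+b1+c1+1, a2+b2+c2+1, a3+b3+c3+1) ∈ ℂ³ is nonzero and the kernel of M equals the one-dimensional span of w. -/
/-!
The rows `r₀, r₁, r₂` of `M` sum to zero, so `r₀` and `r₁` span its row space; rank two makes them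
linearly independent. A vector orthogonal to both is then a multiple of `r₀ ⨯₃ r₁`, because
`(r₀ ⨯₃ r₁) ⨯₃ x = (r₀ ⬝ᵥ x) • r₁ - (r₁ ⬝ᵥ x) • r₀`. Finally, `w` is precisely `r₀ ⨯₃ r₁`.
-/

open Matrix Submodule

theorem span_range_eq_span_range_init_of_sum_eq_zero {R V : Type*} [Ring R] [AddCommGroup V]
    [Module R V] {n : ℕ} {v : Fin (n + 1) → V} (hv : ∑ i, v i = 0) :
    span R (Set.range v) = span R (Set.range (Fin.init v)) := by
  have init_mem (i : Fin n) : v i.castSucc ∈ span R (Set.range (Fin.init v)) :=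
    subset_span ⟨i, rfl⟩
  have last_eq : v (Fin.last n) = -∑ i : Fin n, v i.castSucc := by
    rw [Fin.sum_univ_castSucc] at hv
    exact eq_neg_of_add_eq_zero_right hv
  refine le_antisymm (span_le.2 ?_) (span_mono ?_)
  · rintro _ ⟨i, rfl⟩
    refine i.lastCases ?_ init_mem
    rw [last_eq]
    exact neg_mem (sum_mem fun i _ ↦ init_mem i)
  · rintro _ ⟨i, rfl⟩
    exact ⟨i.castSucc, rfl⟩

theorem forall_dotProduct_eq_zero_iff_span_range_le_ker {R n ι : Type*} [CommSemiring R]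
    [Fintype n] (b : ι → n → R) (x : n → R) :
    (∀ i, b i ⬝ᵥ x = 0) ↔
      span R (Set.range b) ≤ LinearMap.ker ((dotProductBilin R R).flip x) := by
  rw [span_le, Set.range_subset_iff]
  rfl

theorem mulVec_eq_zero_iff_of_span_range_row_eq {R m n ι : Type*} [CommSemiring R] [Fintype n]
    {M : Matrix m n R} {b : ι → n → R}
    (hb : span R (Set.range M.row) = span R (Set.range b)) (x : n → R) :
    M *ᵥ x = 0 ↔ ∀ i, b i ⬝ᵥ x = 0 := by
  rw [forall_dotProduct_eq_zero_iff_span_range_le_ker, ← hb,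
    ← forall_dotProduct_eq_zero_iff_span_range_le_ker]
  exact funext_iff

theorem linearIndependent_of_span_range_row_eq {K m n ι : Type*} [Field K] [Finite m] [Fintype n]
    [Fintype ι] {M : Matrix m n K} {b : ι → n → K}
    (hb : span K (Set.range M.row) = span K (Set.range b)) (hrank : M.rank = Fintype.card ι) :
    LinearIndependent K b := by
  rw [linearIndependent_iff_card_eq_finrank_span, Set.finrank, ← hb, ← hrank,
    rank_eq_finrank_span_row]

section CrossProduct

variable {K : Type*} [Field K]

theorem mem_span_singleton_of_crossProduct_eq_zero {v x : Fin 3 → K} (hv : v ≠ 0)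
    (h : v ⨯₃ x = 0) : x ∈ span K {v} := by
  have dependent : ¬LinearIndependent K ![v, x] := by
    rwa [← crossProduct_ne_zero_iff_linearIndependent, not_not]
  rw [LinearIndependent.pair_iff' hv] at dependent
  push Not at dependent
  exact mem_span_singleton.2 dependent

theorem mem_span_crossProduct_iff {u v : Fin 3 → K} (huv : LinearIndependent K ![u, v])
    (x : Fin 3 → K) : x ∈ span K {u ⨯₃ v} ↔ u ⬝ᵥ x = 0 ∧ v ⬝ᵥ x = 0 := by
  constructor
  · intro hx
    obtain ⟨c, rfl⟩ := mem_span_singleton.1 hx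
    simp
  · rintro ⟨hu, hv⟩
    apply mem_span_singleton_of_crossProduct_eq_zero
      (crossProduct_ne_zero_iff_linearIndependent.2 huv)
    rw [cross_cross_eq_smul_sub_smul, hu, hv, zero_smul, zero_smul, sub_zero]

theorem ker_mulVecLin_eq_span_crossProduct {m : Type*} {M : Matrix m (Fin 3) K}
    {u v : Fin 3 → K} (huv : LinearIndependent K ![u, v])
    (hspan : span K (Set.range M.row) = span K (Set.range ![u, v])) :
    LinearMap.ker M.mulVecLin = span K {u ⨯₃ v} := by
  ext x
  rw [LinearMap.mem_ker, mulVecLin_apply, mulVec_eq_zero_iff_of_span_range_row_eq hspan,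
    mem_span_crossProduct_iff huv, Fin.forall_fin_two]
  rfl

end CrossProduct

theorem rank_two_kernel_eq_span_w_general {K : Type*} [Field K]
    (a₁ a₂ a₃ b₁ b₂ b₃ c₁ c₂ c₃ : K)
    (ha₁ : a₁ = b₁ * b₃ - b₃ * c₂ + c₂ * c₁)
    (ha₂ : a₂ = b₂ * b₁ - b₁ * c₃ + c₃ * c₂)
    (ha₃ : a₃ = b₃ * b₂ - b₂ * c₁ + c₁ * c₃)
    (M : Matrix (Fin 3) (Fin 3) K)
    (hM : M = !![b₂ - c₃, -1 - b₃, 1 + c₂;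
                 1 + c₃, b₃ - c₁, -1 - b₁;
                 -1 - b₂, 1 + c₁, b₁ - c₂])
    (hrank : M.rank = 2) :
    ![a₁ + b₁ + c₁ + 1, a₂ + b₂ + c₂ + 1, a₃ + b₃ + c₃ + 1] ≠ 0 ∧
    LinearMap.ker M.mulVecLin =
      span K {![a₁ + b₁ + c₁ + 1, a₂ + b₂ + c₂ + 1, a₃ + b₃ + c₃ + 1]} ∧
    Module.finrank K
      (span K {![a₁ + b₁ + c₁ + 1, a₂ + b₂ + c₂ + 1, a₃ + b₃ + c₃ + 1]}) = 1 := by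
  have w_eq : ![a₁ + b₁ + c₁ + 1, a₂ + b₂ + c₂ + 1, a₃ + b₃ + c₃ + 1] =
      M.row 0 ⨯₃ M.row 1 := by
    subst hM ha₁ ha₂ ha₃
    ext i
    fin_cases i <;> simp [cross_apply] <;> ring
  have sum_row : ∑ i, M.row i = 0 := by
    subst hM
    ext j
    fin_cases j <;> simp [Fin.sum_univ_three] <;> ring
  have span_row : span K (Set.range M.row) = span K (Set.range ![M.row 0, M.row 1]) := by
    have init_row : Fin.init M.row = ![M.row 0, M.row 1] := by
      ext i : 1
      fin_cases i <;> rfl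
    rw [span_range_eq_span_range_init_of_sum_eq_zero sum_row, init_row]
  have independent : LinearIndependent K ![M.row 0, M.row 1] :=
    linearIndependent_of_span_range_row_eq span_row hrank
  have w_ne_zero := crossProduct_ne_zero_iff_linearIndependent.2 independent
  rw [w_eq]
  exact ⟨w_ne_zero, ker_mulVecLin_eq_span_crossProduct independent span_row,
    finrank_span_singleton w_ne_zero⟩

/-- If rank M = 2 then w ≠ 0 and the kernel of M is the one-dimensional span of w. -/
theorem rank_two_kernel_eq_span_w
    (a₁ a₂ a₃ b₁ b₂ b₃ c₁ c₂ c₃ : ℂ)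
    (ha₁ : a₁ = b₁*b₃ - b₃*c₂ + c₂*c₁)
    (ha₂ : a₂ = b₂*b₁ - b₁*c₃ + c₃*c₂)
    (ha₃ : a₃ = b₃*b₂ - b₂*c₁ + c₁*c₃)
    (M : Matrix (Fin 3) (Fin 3) ℂ)
    (hM : M = !![b₂ - c₃, -1 - b₃, 1 + c₂;
                 1 + c₃, b₃ - c₁, -1 - b₁;
                 -1 - b₂, 1 + c₁, b₁ - c₂])
    (hrank : M.rank = 2) :
    ![a₁ + b₁ + c₁ + 1, a₂ + b₂ + c₂ + 1, a₃ + b₃ + c₃ + 1] ≠ 0 ∧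
    LinearMap.ker M.mulVecLin =
      Submodule.span ℂ
        ({![a₁ + b₁ + c₁ + 1, a₂ + b₂ + c₂ + 1, a₃ + b₃ + c₃ + 1]} : Set (Fin 3 → ℂ)) ∧
    Module.finrank ℂ
      ↥(Submodule.span ℂ
          ({![a₁ + b₁ + c₁ + 1, a₂ + b₂ + c₂ + 1, a₃ + b₃ + c₃ + 1]} :
            Set (Fin 3 → ℂ))) = 1 :=
  rank_two_kernel_eq_span_w_general a₁ a₂ a₃ b₁ b₂ b₃ c₁ c₂ c₃ ha₁ ha₂ ha₃ M hM hrank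
end

section
/- Let b_i, c_i ∈ ℂ and d_i ∈ ℂ (i = 1,2,3) satisfy conditions (hom), suppose rank(M) = 2, and define a_1 := b1·b3 − b3·c2 + c2·c1, a_2 := b2·b1 − b1·c3 + c3·c2, a_3 := b3·b2 − b2·c1 + c1·c3. Then there exists δ ∈ ℂ such that d_i = δ·(a_i + b_i + c_i + 1) for all i ∈ {1,2,3}. -/
/-!
The rows of `M` sum to zero, so when `M` has rank two its first two rows are linearly independent.
Over any field, the vectors orthogonal to two independent vectors `u`, `v` of three-space are the
multiples of `u ⨯₃ v`, and the cross product of the first two rows of `M` has coordinates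
`aᵢ + bᵢ + cᵢ + 1`.
-/

open Matrix Module Submodule

section Field

variable {K : Type*} [Field K]

lemma linearIndependent_of_card_le_rank {ι m n : Type*} [Fintype ι] [Finite m] [Fintype n]
    {M : Matrix m n K} {v : ι → n → K} (hrow : ∀ i, M.row i ∈ span K (Set.range v))
    (hcard : Fintype.card ι ≤ M.rank) : LinearIndependent K v := by
  rw [linearIndependent_iff_card_le_finrank_span]
  calc
    Fintype.card ι ≤ finrank K (span K (Set.range M.row)) := M.rank_eq_finrank_span_row ▸ hcard
    _ ≤ finrank K (span K (Set.range v)) :=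
      finrank_mono (span_le.2 (Set.range_subset_iff.2 hrow))

lemma linearIndependent_rows_of_add_eq_zero {n : Type*} [Fintype n] {M : Matrix (Fin 3) n K}
    (hsum : M 0 + M 1 + M 2 = 0) (hrank : 2 ≤ M.rank) : LinearIndependent K ![M 0, M 1] := by
  have h₀ : M 0 ∈ span K (Set.range ![M 0, M 1]) := subset_span ⟨0, rfl⟩
  have h₁ : M 1 ∈ span K (Set.range ![M 0, M 1]) := subset_span ⟨1, rfl⟩
  have h₂ : M 2 ∈ span K (Set.range ![M 0, M 1]) := by
    rw [eq_neg_of_add_eq_zero_right hsum]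
    exact neg_mem (add_mem h₀ h₁)
  refine linearIndependent_of_card_le_rank (fun i ↦ ?_) hrank
  fin_cases i
  exacts [h₀, h₁, h₂]

lemma exists_eq_smul_of_crossProduct_eq_zero {w x : Fin 3 → K} (hw : w ≠ 0) (hwx : w ⨯₃ x = 0) :
    ∃ δ : K, x = δ • w := by
  have hdep : ¬LinearIndependent K ![w, x] := fun h ↦
    crossProduct_ne_zero_iff_linearIndependent.2 h hwx
  rw [LinearIndependent.pair_iff' hw] at hdep
  push Not at hdep
  exact hdep.imp fun _ ↦ Eq.symm

lemma exists_eq_smul_crossProduct {u v x : Fin 3 → K} (huv : LinearIndependent K ![u, v])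
    (hu : u ⬝ᵥ x = 0) (hv : v ⬝ᵥ x = 0) : ∃ δ : K, x = δ • (u ⨯₃ v) := by
  refine exists_eq_smul_of_crossProduct_eq_zero
    (crossProduct_ne_zero_iff_linearIndependent.2 huv) ?_
  rw [cross_cross_eq_smul_sub_smul, hu, hv, zero_smul, zero_smul, sub_zero]

theorem rank_two_d_parametrisation_general
    {a₁ a₂ a₃ b₁ b₂ b₃ c₁ c₂ c₃ d₁ d₂ d₃ : K}
    (ha₁ : a₁ = b₁ * b₃ - b₃ * c₂ + c₂ * c₁)
    (ha₂ : a₂ = b₂ * b₁ - b₁ * c₃ + c₃ * c₂)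
    (ha₃ : a₃ = b₃ * b₂ - b₂ * c₁ + c₁ * c₃)
    (hom₁ : (b₂ - c₃) * d₁ - (1 + b₃) * d₂ + (1 + c₂) * d₃ = 0)
    (hom₂ : (1 + c₃) * d₁ + (b₃ - c₁) * d₂ - (1 + b₁) * d₃ = 0)
    (hrank : !![b₂ - c₃, -1 - b₃, 1 + c₂;
                1 + c₃, b₃ - c₁, -1 - b₁;
                -1 - b₂, 1 + c₁, b₁ - c₂].rank = 2) :
    ∃ δ : K,
      d₁ = δ * (a₁ + b₁ + c₁ + 1) ∧
      d₂ = δ * (a₂ + b₂ + c₂ + 1) ∧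
      d₃ = δ * (a₃ + b₃ + c₃ + 1) := by
  set u : Fin 3 → K := ![b₂ - c₃, -1 - b₃, 1 + c₂]
  set v : Fin 3 → K := ![1 + c₃, b₃ - c₁, -1 - b₁]
  have hind : LinearIndependent K ![u, v] := by
    refine linearIndependent_rows_of_add_eq_zero ?_ hrank.ge
    ext j
    fin_cases j <;> simp [u, v] <;> ring
  have hu_orth : u ⬝ᵥ ![d₁, d₂, d₃] = 0 := by
    simp only [vec3_dotProduct, u, cons_val]
    linear_combination hom₁
  have hv_orth : v ⬝ᵥ ![d₁, d₂, d₃] = 0 := by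
    simp only [vec3_dotProduct, v, cons_val]
    linear_combination hom₂
  have hcross : u ⨯₃ v = ![a₁ + b₁ + c₁ + 1, a₂ + b₂ + c₂ + 1, a₃ + b₃ + c₃ + 1] := by
    rw [cross_apply, ha₁, ha₂, ha₃]
    apply vec3_eq <;> simp [u, v] <;> ring
  obtain ⟨δ, hδ⟩ := hcross ▸ exists_eq_smul_crossProduct hind hu_orth hv_orth
  exact ⟨δ, congrFun hδ 0, congrFun hδ 1, congrFun hδ 2⟩

end Field

/-- If (hom) holds and rank M = 2, then dᵢ = δ·(aᵢ + bᵢ + cᵢ + 1) for some δ. -/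
theorem rank_two_d_parametrisation
    (a₁ a₂ a₃ b₁ b₂ b₃ c₁ c₂ c₃ d₁ d₂ d₃ : ℂ)
    (ha₁ : a₁ = b₁*b₃ - b₃*c₂ + c₂*c₁)
    (ha₂ : a₂ = b₂*b₁ - b₁*c₃ + c₃*c₂)
    (ha₃ : a₃ = b₃*b₂ - b₂*c₁ + c₁*c₃)
    (hom₁ : (b₂ - c₃)*d₁ - (1 + b₃)*d₂ + (1 + c₂)*d₃ = 0)
    (hom₂ : (1 + c₃)*d₁ + (b₃ - c₁)*d₂ - (1 + b₁)*d₃ = 0)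
    (hom₃ : -(1 + b₂)*d₁ + (1 + c₁)*d₂ + (b₁ - c₂)*d₃ = 0)
    (M : Matrix (Fin 3) (Fin 3) ℂ)
    (hM : M = !![b₂ - c₃, -1 - b₃, 1 + c₂;
                 1 + c₃, b₃ - c₁, -1 - b₁;
                 -1 - b₂, 1 + c₁, b₁ - c₂])
    (hrank : M.rank = 2) :
    ∃ δ : ℂ,
      d₁ = δ*(a₁ + b₁ + c₁ + 1) ∧
      d₂ = δ*(a₂ + b₂ + c₂ + 1) ∧
      d₃ = δ*(a₃ + b₃ + c₃ + 1) := by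
  exact rank_two_d_parametrisation_general ha₁ ha₂ ha₃ hom₁ hom₂ (hM ▸ hrank)
end

section
/- Let p1, p2, q1, q2, r1, r2 ∈ ℂ with p2, q2, r2 pairwise distinct. Then the system (sys2) is compatible on the cube: for every choice of initial data u, ut, uh, ub ∈ ℂ, after computing uth := ((p2−q1)·ut + (p1−q2)·uh − (p1−q1)·u)/(p2−q2), uhb := ((q2−r1)·uh + (q1−r2)·ub − (q1−r1)·u)/(q2−r2), ubt := ((r2−p1)·ub + (r1−p2)·ut − (r1−p1)·u)/(r2−p2), the three values ((p2−q1)·ubt + (p1−q2)·uhb − (p1−q1)·ub)/(p2−q2), ((q2−r1)·uth + (q1−r2)·ubt − (q1−r1)·ut)/(q2−r2), ((r2−p1)·uhb + (r1−p2)·uth − (r1−p1)·uh)/(r2−p2) are all equal. -/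
/-!
With `w a b = (a₂ - b₁) / (a₂ - b₂)`, the equation on a face expresses the increment from `u` to
the opposite vertex as a linear combination of the increments along its two edges at `u`:
`uth - u = w p q * (ut - u) + w q p * (uh - u)`. Going around the cube multiplies the weights:
each of the three ways of computing `uthb` gives
`u + w p q * w p r * (ut - u) + w q r * w q p * (uh - u) + w r p * w r q * (ub - u)`,
which is invariant under cyclic permutations. The only identity needed is the partial fraction
expansion in `r₂` of `w r p * w r q`, which is the coefficient of `ub - u`.
-/

section Sys2

variable {K : Type*} [Field K]

/-- The vertex opposite to `u` on a face of (sys2): the solution `uab` of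
`(a₁ - b₁) u + (a₂ - b₂) uab = (a₂ - b₁) ua + (a₁ - b₂) ub`, where the pairs `a = (a₁, a₂)` and
`b = (b₁, b₂)` are the parameters of the two edge directions and `ua`, `ub` are the neighbours of
`u` in these directions. It is meaningful only for `a₂ ≠ b₂`. -/
def faceVertex (a b : K × K) (u ua ub : K) : K :=
  ((a.2 - b.1) * ua + (a.1 - b.2) * ub - (a.1 - b.1) * u) / (a.2 - b.2)

/-- The factor by which an increment in direction `a` contributes to the diagonal increment of a
face with directions `a` and `b`. -/
def edgeWeight (a b : K × K) : K :=
  (a.2 - b.1) / (a.2 - b.2)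

/-- The vertex `uthb` of the cube opposite to `u`, written symmetrically in the three directions
`p`, `q`, `r` and the corresponding neighbours `ut`, `uh`, `ub` of `u`. -/
def cubeVertex (p q r : K × K) (u ut uh ub : K) : K :=
  u + edgeWeight p q * edgeWeight p r * (ut - u)
    + edgeWeight q r * edgeWeight q p * (uh - u)
    + edgeWeight r p * edgeWeight r q * (ub - u)

lemma faceVertex_eq_add_edgeWeight_mul {a b : K × K} (hab : a.2 ≠ b.2) (u ua ub : K) :
    faceVertex a b u ua ub
      = u + edgeWeight a b * (ua - u) + edgeWeight b a * (ub - u) := by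
  have hab' := sub_ne_zero.mpr hab
  have hba' := sub_ne_zero.mpr hab.symm
  unfold faceVertex edgeWeight
  field_simp
  ring

lemma edgeWeight_mul_edgeWeight {p q r : K × K}
    (hpq : p.2 ≠ q.2) (hqr : q.2 ≠ r.2) (hrp : r.2 ≠ p.2) :
    edgeWeight r p * edgeWeight r q
      = 1 + edgeWeight p q * (edgeWeight r p - 1) + edgeWeight q p * (edgeWeight r q - 1) := by
  have hpq' := sub_ne_zero.mpr hpq
  have hqp' := sub_ne_zero.mpr hpq.symm
  have hrq' := sub_ne_zero.mpr hqr.symm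
  have hrp' := sub_ne_zero.mpr hrp
  unfold edgeWeight
  field_simp
  ring

lemma cubeVertex_rotate (p q r : K × K) (u ut uh ub : K) :
    cubeVertex q r p u uh ub ut = cubeVertex p q r u ut uh ub := by
  unfold cubeVertex
  ring

lemma faceVertex_faceVertex_eq_cubeVertex {p q r : K × K}
    (hpq : p.2 ≠ q.2) (hqr : q.2 ≠ r.2) (hrp : r.2 ≠ p.2) (u ut uh ub : K) :
    faceVertex p q ub (faceVertex r p u ub ut) (faceVertex q r u uh ub)
      = cubeVertex p q r u ut uh ub := by
  rw [faceVertex_eq_add_edgeWeight_mul hpq, faceVertex_eq_add_edgeWeight_mul hrp,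
    faceVertex_eq_add_edgeWeight_mul hqr, cubeVertex, edgeWeight_mul_edgeWeight hpq hqr hrp]
  ring

theorem sys2_compatible_general {p q r : K × K}
    (hpq : p.2 ≠ q.2) (hqr : q.2 ≠ r.2) (hrp : r.2 ≠ p.2) (u ut uh ub : K) :
    let uth := faceVertex p q u ut uh
    let uhb := faceVertex q r u uh ub
    let ubt := faceVertex r p u ub ut
    faceVertex p q ub ubt uhb = faceVertex q r ut uth ubt ∧
      faceVertex q r ut uth ubt = faceVertex r p uh uhb uth := by
  intro uth uhb ubt
  have via_b : faceVertex p q ub ubt uhb = cubeVertex p q r u ut uh ub :=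
    faceVertex_faceVertex_eq_cubeVertex hpq hqr hrp u ut uh ub
  have via_t : faceVertex q r ut uth ubt = cubeVertex q r p u uh ub ut :=
    faceVertex_faceVertex_eq_cubeVertex hqr hrp hpq u uh ub ut
  have via_h : faceVertex r p uh uhb uth = cubeVertex r p q u ub ut uh :=
    faceVertex_faceVertex_eq_cubeVertex hrp hpq hqr u ub ut uh
  rw [via_b, via_t, via_h]
  exact ⟨(cubeVertex_rotate p q r u ut uh ub).symm, (cubeVertex_rotate q r p u uh ub ut).symm⟩

end Sys2

/-- The system (sys2) is compatible on the cube when p₂, q₂, r₂ are pairwise distinct. -/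
theorem sys2_compatible (p₁ p₂ q₁ q₂ r₁ r₂ : ℂ)
    (hpq : p₂ ≠ q₂) (hqr : q₂ ≠ r₂) (hrp : r₂ ≠ p₂) :
    ∀ u ut uh ub : ℂ,
      (((p₂ - q₁)*(((r₂ - p₁)*ub + (r₁ - p₂)*ut - (r₁ - p₁)*u)/(r₂ - p₂))
          + (p₁ - q₂)*(((q₂ - r₁)*uh + (q₁ - r₂)*ub - (q₁ - r₁)*u)/(q₂ - r₂))
          - (p₁ - q₁)*ub)/(p₂ - q₂)
        = ((q₂ - r₁)*(((p₂ - q₁)*ut + (p₁ - q₂)*uh - (p₁ - q₁)*u)/(p₂ - q₂))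
          + (q₁ - r₂)*(((r₂ - p₁)*ub + (r₁ - p₂)*ut - (r₁ - p₁)*u)/(r₂ - p₂))
          - (q₁ - r₁)*ut)/(q₂ - r₂)) ∧
      (((q₂ - r₁)*(((p₂ - q₁)*ut + (p₁ - q₂)*uh - (p₁ - q₁)*u)/(p₂ - q₂))
          + (q₁ - r₂)*(((r₂ - p₁)*ub + (r₁ - p₂)*ut - (r₁ - p₁)*u)/(r₂ - p₂))
          - (q₁ - r₁)*ut)/(q₂ - r₂)
        = ((r₂ - p₁)*(((q₂ - r₁)*uh + (q₁ - r₂)*ub - (q₁ - r₁)*u)/(q₂ - r₂))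
          + (r₁ - p₂)*(((p₂ - q₁)*ut + (p₁ - q₂)*uh - (p₁ - q₁)*u)/(p₂ - q₂))
          - (r₁ - p₁)*uh)/(r₂ - p₂)) :=
  sys2_compatible_general (p := (p₁, p₂)) (q := (q₁, q₂)) (r := (r₁, r₂)) hpq hqr hrp
end

section
/- Let a, b, c ∈ ℂ∖{0} and d ∈ ℂ. Then there exist α1, α2 ∈ ℂ∖{0} and β0, β1, β2 ∈ ℂ such that, defining T(v)(n,m) := α1^n·α2^m·v(n,m) + β0 + β1·n + β2·m for functions v: ℤ² → ℂ, at least one of the following holds: (i) there exists d' ∈ ℂ such that for every v: ℤ² → ℂ, T(v) satisfies a·u + b·ũ + c·û + u~^ = d for all (n,m) ∈ ℤ² if and only if v satisfies v − ṽ − v̂ + v~^ = d' for all (n,m) ∈ ℤ²; or (ii) there exists γ ∈ ℂ∖{0} such that for every v: ℤ² → ℂ, T(v) satisfies a·u + b·ũ + c·û + u~^ = d for all (n,m) ∈ ℤ² if and only if v satisfies v − v~^ = γ·(ṽ − v̂) for all (n,m) ∈ ℤ². -/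
/-!
A gauge factor `α₁ ^ n * α₂ ^ m` rescales the coefficients `(a, b, c, e)` of a linear quad equation
to `(a, b * α₁, c * α₂, e * (α₁ * α₂))`, and these are proportional to `(1, -γ, γ, -1)` exactly when
`γ ^ 2 = b * c / (a * e)`, `α₁ = -(a * γ / b)` and `α₂ = a * γ / c`. The constant `d` is absorbed by
an affine particular solution, which fails to exist only if `(a, b, c, e)` is proportional to
`(1, -1, -1, 1)`; in that case the equation is, up to scaling, already in the other canonical form.
-/

namespace LinearQuadEquation

section CommRing

variable {R : Type*} [CommRing R]

/-- The linear quad operator `u ↦ a u + b ũ + c û + e u~^` on lattice functions. The coefficient `e`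
is not normalized to `1`, since gauge transformations rescale it. -/
def quadOp (a b c e : R) (u : ℤ → ℤ → R) (n m : ℤ) : R :=
  a * u n m + b * u (n + 1) m + c * u n (m + 1) + e * u (n + 1) (m + 1)

/-- The lattice function that is affine in `(n, m)`, the point part of the transformation `T`. -/
def affine (β₀ β₁ β₂ : R) (n m : ℤ) : R :=
  β₀ + β₁ * n + β₂ * m

lemma quadOp_add (a b c e : R) (u w : ℤ → ℤ → R) :
    quadOp a b c e (u + w) = quadOp a b c e u + quadOp a b c e w := by
  funext n m
  simp only [quadOp, Pi.add_apply]
  ring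

lemma quadOp_affine (a b c e β₀ β₁ β₂ : R) (n m : ℤ) :
    quadOp a b c e (affine β₀ β₁ β₂) n m =
      (a + b + c + e) * affine β₀ β₁ β₂ n m + (b + e) * β₁ + (c + e) * β₂ := by
  simp only [quadOp, affine, Int.cast_add, Int.cast_one]
  ring

end CommRing

section Field

variable {K : Type*} [Field K]

/-- The gauge transformation of lattice functions with multiplicative factor `α₁ ^ n * α₂ ^ m`. -/
def gaugeTransform (α₁ α₂ : K) (v : ℤ → ℤ → K) (n m : ℤ) : K :=
  α₁ ^ n * α₂ ^ m * v n m

/-- The combined point and gauge transformation `T`. -/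
def transform (α₁ α₂ β₀ β₁ β₂ : K) (v : ℤ → ℤ → K) : ℤ → ℤ → K :=
  gaugeTransform α₁ α₂ v + affine β₀ β₁ β₂

lemma transform_one_one_zero_zero_zero (v : ℤ → ℤ → K) : transform 1 1 0 0 0 v = v := by
  funext n m
  simp [transform, gaugeTransform, affine]

lemma quadOp_gaugeTransform {α₁ α₂ : K} (hα₁ : α₁ ≠ 0) (hα₂ : α₂ ≠ 0) (a b c e : K)
    (v : ℤ → ℤ → K) :
    quadOp a b c e (gaugeTransform α₁ α₂ v) =
      gaugeTransform α₁ α₂ (quadOp a (b * α₁) (c * α₂) (e * (α₁ * α₂)) v) := by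
  funext n m
  simp only [quadOp, gaugeTransform, zpow_add_one₀ hα₁, zpow_add_one₀ hα₂]
  ring

lemma gaugeTransform_apply_eq_zero_iff {α₁ α₂ : K} (hα₁ : α₁ ≠ 0) (hα₂ : α₂ ≠ 0) (v : ℤ → ℤ → K)
    (n m : ℤ) : gaugeTransform α₁ α₂ v n m = 0 ↔ v n m = 0 :=
  mul_eq_zero_iff_left (mul_ne_zero (zpow_ne_zero n hα₁) (zpow_ne_zero m hα₂))

lemma exists_quadOp_affine_eq {a b c e : K} (h : ¬(a = e ∧ b = -e ∧ c = -e)) (d : K) :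
    ∃ β₀ β₁ β₂ : K, ∀ n m : ℤ, quadOp a b c e (affine β₀ β₁ β₂) n m = d := by
  simp only [quadOp_affine]
  by_cases hsum : a + b + c + e = 0
  · by_cases hb : b + e = 0
    · have hc : c + e ≠ 0 := fun hc =>
        h ⟨by linear_combination hsum - hb - hc, by linear_combination hb,
          by linear_combination hc⟩
      exact ⟨0, 0, d / (c + e), fun n m => by simp [hsum, mul_div_cancel₀ d hc]⟩
    · exact ⟨0, d / (b + e), 0, fun n m => by simp [hsum, mul_div_cancel₀ d hb]⟩
  · exact ⟨d / (a + b + c + e), 0, 0, fun n m => by simp [affine, mul_div_cancel₀ d hsum]⟩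

lemma quadOp_transform_eq_iff {a b c e d α₁ α₂ β₀ β₁ β₂ : K} (hα₁ : α₁ ≠ 0) (hα₂ : α₂ ≠ 0)
    {n m : ℤ} (hβ : quadOp a b c e (affine β₀ β₁ β₂) n m = d) (v : ℤ → ℤ → K) :
    quadOp a b c e (transform α₁ α₂ β₀ β₁ β₂ v) n m = d ↔
      quadOp a (b * α₁) (c * α₂) (e * (α₁ * α₂)) v n m = 0 := by
  rw [transform, quadOp_add, Pi.add_apply, Pi.add_apply, hβ, add_eq_right,
    quadOp_gaugeTransform hα₁ hα₂, gaugeTransform_apply_eq_zero_iff hα₁ hα₂]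

lemma quadOp_eq_zero_iff_sub_eq_mul_sub {a : K} (ha : a ≠ 0) (γ : K) (v : ℤ → ℤ → K) (n m : ℤ) :
    quadOp a (-(a * γ)) (a * γ) (-a) v n m = 0 ↔
      v n m - v (n + 1) (m + 1) = γ * (v (n + 1) m - v n (m + 1)) := by
  have hfactor : quadOp a (-(a * γ)) (a * γ) (-a) v n m =
      a * (v n m - v (n + 1) (m + 1) - γ * (v (n + 1) m - v n (m + 1))) := by
    rw [quadOp]
    ring
  rw [hfactor, mul_eq_zero_iff_left ha, sub_eq_zero]

lemma exists_gauge_coefficients {a b c e : K} (ha : a ≠ 0) (hb : b ≠ 0) (hc : c ≠ 0) (he : e ≠ 0)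
    (hsq : IsSquare (b * c / (a * e))) :
    ∃ γ α₁ α₂ : K, γ ≠ 0 ∧ α₁ ≠ 0 ∧ α₂ ≠ 0 ∧
      b * α₁ = -(a * γ) ∧ c * α₂ = a * γ ∧ e * (α₁ * α₂) = -a := by
  obtain ⟨γ, hγ⟩ := hsq
  have hγ₀ : γ ≠ 0 := by
    rintro rfl
    exact div_ne_zero (mul_ne_zero hb hc) (mul_ne_zero ha he) (hγ.trans (mul_zero 0))
  refine ⟨γ, -(a * γ / b), a * γ / c, hγ₀,
    neg_ne_zero.mpr (div_ne_zero (mul_ne_zero ha hγ₀) hb), div_ne_zero (mul_ne_zero ha hγ₀) hc,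
    by rw [mul_neg, mul_div_cancel₀ _ hb], mul_div_cancel₀ _ hc, ?_⟩
  field_simp at hγ ⊢
  linear_combination hγ

theorem exists_transform_iff_sub_eq_mul_sub {a b c e : K} (ha : a ≠ 0) (hb : b ≠ 0) (hc : c ≠ 0)
    (he : e ≠ 0) (hsq : IsSquare (b * c / (a * e))) (h : ¬(a = e ∧ b = -e ∧ c = -e)) (d : K) :
    ∃ α₁ α₂ β₀ β₁ β₂ γ : K, α₁ ≠ 0 ∧ α₂ ≠ 0 ∧ γ ≠ 0 ∧ ∀ v : ℤ → ℤ → K,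
      (∀ n m : ℤ, quadOp a b c e (transform α₁ α₂ β₀ β₁ β₂ v) n m = d) ↔
        ∀ n m : ℤ, v n m - v (n + 1) (m + 1) = γ * (v (n + 1) m - v n (m + 1)) := by
  obtain ⟨β₀, β₁, β₂, hβ⟩ := exists_quadOp_affine_eq h d
  obtain ⟨γ, α₁, α₂, hγ, hα₁, hα₂, hbα, hcα, heα⟩ := exists_gauge_coefficients ha hb hc he hsq
  refine ⟨α₁, α₂, β₀, β₁, β₂, γ, hα₁, hα₂, hγ, fun v => forall₂_congr fun n m => ?_⟩
  rw [quadOp_transform_eq_iff hα₁ hα₂ (hβ n m), hbα, hcα, heα,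
    quadOp_eq_zero_iff_sub_eq_mul_sub ha]

lemma quadOp_neg_neg_eq_iff {e : K} (he : e ≠ 0) (d : K) (v : ℤ → ℤ → K) (n m : ℤ) :
    quadOp e (-e) (-e) e v n m = d ↔
      v n m - v (n + 1) m - v n (m + 1) + v (n + 1) (m + 1) = d / e := by
  have hfactor : quadOp e (-e) (-e) e v n m =
      (v n m - v (n + 1) m - v n (m + 1) + v (n + 1) (m + 1)) * e := by
    rw [quadOp]
    ring
  rw [hfactor, eq_div_iff he]

end Field

end LinearQuadEquation

open LinearQuadEquation in
theorem linear_quad_equation_canonical_form_general {K : Type*} [Field K] {a b c e : K}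
    (ha : a ≠ 0) (hb : b ≠ 0) (hc : c ≠ 0) (he : e ≠ 0) (hsq : IsSquare (b * c / (a * e))) (d : K) :
    ∃ α₁ α₂ β₀ β₁ β₂ : K, α₁ ≠ 0 ∧ α₂ ≠ 0 ∧
      ((∃ d' : K, ∀ v : ℤ → ℤ → K,
          (∀ n m : ℤ, quadOp a b c e (transform α₁ α₂ β₀ β₁ β₂ v) n m = d) ↔
            ∀ n m : ℤ, v n m - v (n + 1) m - v n (m + 1) + v (n + 1) (m + 1) = d') ∨
        ∃ γ : K, γ ≠ 0 ∧ ∀ v : ℤ → ℤ → K,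
          (∀ n m : ℤ, quadOp a b c e (transform α₁ α₂ β₀ β₁ β₂ v) n m = d) ↔
            ∀ n m : ℤ, v n m - v (n + 1) (m + 1) = γ * (v (n + 1) m - v n (m + 1))) := by
  by_cases h : a = e ∧ b = -e ∧ c = -e
  · obtain ⟨rfl, rfl, rfl⟩ := h
    refine ⟨1, 1, 0, 0, 0, one_ne_zero, one_ne_zero, .inl ⟨d / a, fun v => ?_⟩⟩
    simp only [transform_one_one_zero_zero_zero, quadOp_neg_neg_eq_iff he]
  · obtain ⟨α₁, α₂, β₀, β₁, β₂, γ, hα₁, hα₂, hγ, hiff⟩ :=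
      exists_transform_iff_sub_eq_mul_sub ha hb hc he hsq h d
    exact ⟨α₁, α₂, β₀, β₁, β₂, hα₁, hα₂, .inr ⟨γ, hγ, hiff⟩⟩

/-- Every linear quadrilateral lattice equation can be brought, by a combined point and
gauge transformation T, either to the form v − ṽ − v̂ + v~^ = d' or to the form
v − v~^ = γ(ṽ − v̂). -/
theorem linear_quad_equation_canonical_form
    (a b c : ℂ) (ha : a ≠ 0) (hb : b ≠ 0) (hc : c ≠ 0) (d : ℂ) :
    ∃ α₁ α₂ β₀ β₁ β₂ : ℂ, α₁ ≠ 0 ∧ α₂ ≠ 0 ∧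
      ((∃ d' : ℂ, ∀ v : ℤ → ℤ → ℂ,
          (∀ n m : ℤ,
            a * (α₁^n * α₂^m * v n m + β₀ + β₁*n + β₂*m)
              + b * (α₁^(n+1) * α₂^m * v (n+1) m + β₀ + β₁*(n+1) + β₂*m)
              + c * (α₁^n * α₂^(m+1) * v n (m+1) + β₀ + β₁*n + β₂*(m+1))
              + (α₁^(n+1) * α₂^(m+1) * v (n+1) (m+1) + β₀ + β₁*(n+1) + β₂*(m+1)) = d)
          ↔ (∀ n m : ℤ,
              v n m - v (n+1) m - v n (m+1) + v (n+1) (m+1) = d')) ∨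
       (∃ γ : ℂ, γ ≠ 0 ∧ ∀ v : ℤ → ℤ → ℂ,
          (∀ n m : ℤ,
            a * (α₁^n * α₂^m * v n m + β₀ + β₁*n + β₂*m)
              + b * (α₁^(n+1) * α₂^m * v (n+1) m + β₀ + β₁*(n+1) + β₂*m)
              + c * (α₁^n * α₂^(m+1) * v n (m+1) + β₀ + β₁*n + β₂*(m+1))
              + (α₁^(n+1) * α₂^(m+1) * v (n+1) (m+1) + β₀ + β₁*(n+1) + β₂*(m+1)) = d)
          ↔ (∀ n m : ℤ,
              v n m - v (n+1) (m+1) = γ * (v (n+1) m - v n (m+1))))) := by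
  open LinearQuadEquation in
  simpa only [quadOp, transform, gaugeTransform, affine, Pi.add_apply, Int.cast_add, Int.cast_one,
    one_mul, ← add_assoc] using
    linear_quad_equation_canonical_form_general ha hb hc one_ne_zero (Complex.isSquare _) d
end
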